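/- arXiv:1112.4409 — 3 statements merged into one kernel-verified Lean document; each statement's English description precedes it below -/
import Mathlib

section
/- (Dovbysh–Sudakov representation) If (R_{l,l'})_{l,l'≥1} is a Gram–de Finetti array with R_{l,l} = 1 for all l, then there exists a random probability measure G on the unit ball of a separable Hilbert space such that (R_{l,l'})_{l,l'≥1} is equal in distribution to (ρ^l·ρ^{l'} + δ_{l,l'}(1 − ‖ρ^l‖²))_{l,l'≥1}, where (ρ^l)_{l≥1} is an i.i.d. sample from G (drawn conditionally on G) and δ_{l,l'} is the Kronecker delta. -/
open MeasureTheory ProbabilityTheory Real Filter RealInnerProductSpace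

noncomputable section

/-- The separable Hilbert space `ℓ²` of square-summable real sequences. -/
abbrev ell2 : Type := ↥(lp (fun _ : ℕ => ℝ) 2)

instance : MeasurableSpace ell2 := borel ell2
instance : BorelSpace ell2 := ⟨rfl⟩


theorem ds_map_eq_of_tendsto {Ω X : Type*} [MeasurableSpace Ω] (P : Measure Ω)
    [IsProbabilityMeasure P] [TopologicalSpace X] [MeasurableSpace X] [BorelSpace X]
    [HasOuterApproxClosed X]
    (Y : ℕ → Ω → X) (Z : Ω → X) (hY : ∀ n, Measurable (Y n)) (hZ : Measurable Z)
    (ν : Measure X) (h : ∀ n, P.map (Y n) = ν)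
    (hlim : ∀ ω, Tendsto (fun n => Y n ω) atTop (nhds (Z ω))) : P.map Z = ν := by
  have : IsProbabilityMeasure (P.map Z) := Measure.isProbabilityMeasure_map hZ.aemeasurable
  have : IsProbabilityMeasure ν := h 0 ▸ Measure.isProbabilityMeasure_map (hY 0).aemeasurable
  apply ext_of_forall_integral_eq_of_IsFiniteMeasure
  intro f
  have hf : Measurable f := f.continuous.measurable
  rw [integral_map hZ.aemeasurable hf.aestronglyMeasurable]
  have h1 : ∀ n, ∫ ω, f (Y n ω) ∂P = ∫ x, f x ∂ν := by
    intro n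
    rw [← h n, integral_map (hY n).aemeasurable hf.aestronglyMeasurable]
  have h2 : Tendsto (fun n => ∫ ω, f (Y n ω) ∂P) atTop (nhds (∫ ω, f (Z ω) ∂P)) := by
    apply tendsto_integral_of_dominated_convergence (fun _ => ‖f‖)
    · intro n; exact (hf.comp (hY n)).aestronglyMeasurable
    · exact integrable_const _
    · intro n; exact Eventually.of_forall fun ω => f.norm_coe_le_norm _
    · exact Eventually.of_forall fun ω => (f.continuous.tendsto _).comp (hlim ω)
  simp only [h1] at h2
  exact (tendsto_nhds_unique tendsto_const_nhds h2).symm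

theorem ds_exists_perm (φ : ℕ → ℕ) (hφ : Function.Injective φ) (n : ℕ) :
    ∃ σ : Equiv.Perm ℕ, {l | σ l ≠ l}.Finite ∧ ∀ k < n, σ k = φ k := by
  induction n with
  | zero => exact ⟨1, by simp, by simp⟩
  | succ n ih =>
    obtain ⟨σ, hfin, hσ⟩ := ih
    refine ⟨Equiv.swap (σ n) (φ n) * σ, ?_, ?_⟩
    · refine (hfin.union (Set.toFinite {σ n, φ n})).subset ?_
      intro k hk
      by_contra hcon
      simp only [Set.mem_union, Set.mem_ofPred_eq, Set.mem_insert_iff, Set.mem_singleton_iff,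
        not_or, not_not] at hcon
      obtain ⟨h1, h2, h3⟩ := hcon
      apply hk
      rw [Equiv.Perm.mul_apply, h1, Equiv.swap_apply_of_ne_of_ne h2 h3]
    · intro k hk
      rcases Nat.lt_succ_iff_lt_or_eq.mp hk with hk | rfl
      · rw [Equiv.Perm.mul_apply, Equiv.swap_apply_of_ne_of_ne, hσ k hk]
        · exact fun h => hk.ne (σ.injective h)
        · rw [hσ k hk]; exact fun h => hk.ne (hφ h)
      · simp

theorem ds_inj {Ω : Type*} [MeasurableSpace Ω] (P : Measure Ω)
    [IsProbabilityMeasure P]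
    (R : ℕ → ℕ → Ω → ℝ) (hR_meas : ∀ l l', Measurable (R l l'))
    (hexch : ∀ perm : Equiv.Perm ℕ, {l | perm l ≠ l}.Finite →
      Measure.map (fun ω => fun l l' : ℕ => R (perm l) (perm l') ω) P =
        Measure.map (fun ω => fun l l' : ℕ => R l l' ω) P)
    (φ : ℕ → ℕ) (hφ : Function.Injective φ) :
    Measure.map (fun ω => fun l l' : ℕ => R (φ l) (φ l') ω) P =
        Measure.map (fun ω => fun l l' : ℕ => R l l' ω) P := by
  choose σ hfin hσ using ds_exists_perm φ hφ
  refine ds_map_eq_of_tendsto P (fun n ω l l' => R (σ n l) (σ n l') ω) _ ?_ ?_ _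
    (fun n => hexch (σ n) (hfin n)) ?_
  · intro n; fun_prop
  · fun_prop
  · intro ω
    rw [tendsto_pi_nhds]; intro l
    rw [tendsto_pi_nhds]; intro l'
    apply tendsto_const_nhds.congr'
    filter_upwards [eventually_gt_atTop l, eventually_gt_atTop l'] with n h1 h2
    rw [hσ n l h1, hσ n l' h2]

theorem ds_bdd_prod {α : Type*} (n : ℕ) (f : ℕ → α → ℝ) (hb : ∀ i, ∃ C, ∀ x, |f i x| ≤ C) 
    {β : Type*} (g : ℕ → β → α) :
    ∃ C, ∀ x, |∏ i ∈ Finset.range n, f i (g i x)| ≤ C := by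
  choose C hC using hb
  refine ⟨∏ i ∈ Finset.range n, C i, fun x => ?_⟩
  rw [Finset.abs_prod]
  exact Finset.prod_le_prod (fun i _ => abs_nonneg _) (fun i _ => hC i _)

theorem ds_bdd_mul {α : Type*} {f g : α → ℝ} (hf : ∃ C, ∀ x, |f x| ≤ C)
    (hg : ∃ C, ∀ x, |g x| ≤ C) : ∃ C, ∀ x, |f x * g x| ≤ C := by
  obtain ⟨C, hC⟩ := hf
  obtain ⟨D, hD⟩ := hg
  refine ⟨C * D, fun x => ?_⟩
  rw [abs_mul]
  exact mul_le_mul (hC x) (hD x) (abs_nonneg _) ((abs_nonneg _).trans (hC x))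

theorem ds_integrable {Ω : Type*} [MeasurableSpace Ω] (P : Measure Ω) [IsFiniteMeasure P]
    {f : Ω → ℝ} (hf : Measurable f) (hb : ∃ C, ∀ x, |f x| ≤ C) : Integrable f P := by
  obtain ⟨C, hC⟩ := hb
  exact Integrable.of_bound hf.aestronglyMeasurable C (Eventually.of_forall hC)

theorem ds_bdd_integral {α β : Type*} [MeasurableSpace α] [MeasurableSpace β] (κ : Kernel α β)
    [IsMarkovKernel κ] {f : β → ℝ} (hb : ∃ C, ∀ x, |f x| ≤ C) :
    ∃ C, ∀ a, |∫ x, f x ∂(κ a)| ≤ C := by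
  obtain ⟨C, hC⟩ := hb
  refine ⟨C, fun a => ?_⟩
  have := norm_integral_le_of_norm_le_const (μ := κ a) (f := f) (C := C) (Eventually.of_forall hC)
  simpa using this

theorem ds_meas_integral {α β : Type*} [MeasurableSpace α] [MeasurableSpace β] (κ : Kernel α β)
    [IsMarkovKernel κ] {f : β → ℝ} (hf : Measurable f) :
    Measurable (fun a => ∫ x, f x ∂(κ a)) :=
  (hf.stronglyMeasurable.integral_kernel (κ := κ)).measurable

theorem ds_definetti {Ω : Type*} [MeasurableSpace Ω] (P : Measure Ω) [IsProbabilityMeasure P]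
    {E : Type*} [MeasurableSpace E] [StandardBorelSpace E] [Nonempty E]
    (ξ : ℕ → Ω → E) (hξ : ∀ n, Measurable (ξ n))
    (hexch : ∀ φ : ℕ → ℕ, Function.Injective φ →
      P.map (fun ω n => ξ (φ n) ω) = P.map (fun ω n => ξ n ω)) :
    ∃ κ : Kernel (ℕ → E) E, IsMarkovKernel κ ∧ ∀ (n : ℕ) (f : ℕ → E → ℝ),
      (∀ i, Measurable (f i)) → (∀ i, ∃ C, ∀ x, |f i x| ≤ C) →
      ∀ φ : (ℕ → E) → ℝ, Measurable φ → (∃ C, ∀ x, |φ x| ≤ C) →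
      ∫ ω, φ (fun k => ξ (2 * k) ω) * ∏ i ∈ Finset.range n, f i (ξ (2 * i + 1) ω) ∂P =
      ∫ ω, φ (fun k => ξ (2 * k) ω) *
        ∏ i ∈ Finset.range n, ∫ x, f i x ∂(κ (fun k => ξ (2 * k) ω)) ∂P := by
  set Y : Ω → (ℕ → E) := fun ω k => ξ (2 * k) ω with hYdef
  have hY : Measurable Y := by fun_prop
  set κ := condDistrib (ξ 1) Y P with hκ
  have hcomp : P.map Y ⊗ₘ κ = P.map (fun ω => (Y ω, ξ 1 ω)) :=
    compProd_map_condDistrib (hξ 1).aemeasurable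
  -- laws of pairs
  have hpair : ∀ (z : ℕ → ℕ) (w : ℕ), Function.Injective z → (∀ k, z k ≠ w) →
      P.map (fun ω => ((fun k => ξ (z k) ω : ℕ → E), ξ w ω)) = P.map (fun ω => (Y ω, ξ 1 ω)) := by
    have key : ∀ (z : ℕ → ℕ) (w : ℕ), Function.Injective z → (∀ k, z k ≠ w) →
        P.map (fun ω => ((fun k => ξ (z k) ω : ℕ → E), ξ w ω)) =
        (P.map (fun ω n => ξ n ω)).map (fun s : ℕ → E => ((fun k => s (k + 1) : ℕ → E), s 0)) := by
      intro z w hz hzw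
      let ψ : ℕ → ℕ := fun n => Nat.casesOn n w z
      have hψ : Function.Injective ψ := by
        intro a b hab
        rcases a with _ | a <;> rcases b with _ | b
        · rfl
        · exact absurd hab.symm (hzw b)
        · exact absurd hab (hzw a)
        · exact congrArg _ (hz hab)
      rw [← hexch ψ hψ, Measure.map_map (by fun_prop) (by fun_prop)]
      rfl
    intro z w hz hzw
    rw [key z w hz hzw, key (fun k => 2 * k) 1 (fun a b h => by simpa using h) (fun k => by omega)]
  have hstar : ∀ (z : ℕ → ℕ) (w : ℕ), Function.Injective z → (∀ k, z k ≠ w) →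
      ∀ (φ : (ℕ → E) → ℝ) (f : E → ℝ), Measurable φ → Measurable f → (∃ C, ∀ x, |φ x| ≤ C) →
      (∃ C, ∀ x, |f x| ≤ C) →
      ∫ ω, φ (fun k => ξ (z k) ω) * f (ξ w ω) ∂P =
      ∫ ω, φ (fun k => ξ (z k) ω) * ∫ x, f x ∂(κ (fun k => ξ (z k) ω)) ∂P := by
    intro z w hz hzw φ f hφ hf hφb hfb
    have hZ : Measurable (fun ω k => ξ (z k) ω : Ω → (ℕ → E)) := by fun_prop
    have h1 := hpair z w hz hzw
    have hfst : P.map (fun ω k => ξ (z k) ω : Ω → (ℕ → E)) = P.map Y := by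
      have := congrArg (fun m => m.map Prod.fst) h1
      rw [Measure.map_map (by fun_prop) (by fun_prop),
        Measure.map_map (by fun_prop) (by fun_prop)] at this
      exact this
    have hm : Measurable (fun p : (ℕ → E) × E => φ p.1 * f p.2) := by fun_prop
    have hmg := ds_meas_integral κ hf
    have e1 : ∫ ω, φ (fun k => ξ (z k) ω) * f (ξ w ω) ∂P =
        ∫ p, φ p.1 * f p.2 ∂(P.map (fun ω => ((fun k => ξ (z k) ω : ℕ → E), ξ w ω))) := by
      rw [integral_map (by fun_prop) hm.aestronglyMeasurable]
    have e2 : ∫ ω, φ (fun k => ξ (z k) ω) * ∫ x, f x ∂(κ (fun k => ξ (z k) ω)) ∂P =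
        ∫ s, φ s * ∫ x, f x ∂(κ s) ∂(P.map (fun ω k => ξ (z k) ω : Ω → (ℕ → E))) := by
      have hmm : Measurable (fun s => φ s * ∫ x, f x ∂(κ s)) := hφ.mul hmg
      rw [integral_map hZ.aemeasurable hmm.aestronglyMeasurable]
    rw [e1, e2, h1, hfst, ← hcomp, Measure.integral_compProd]
    · simp only [integral_const_mul]
    · have : IsProbabilityMeasure (P.map Y) := Measure.isProbabilityMeasure_map hY.aemeasurable
      exact ds_integrable _ hm (ds_bdd_mul (f := fun p : (ℕ → E) × E => φ p.1)
        (g := fun p => f p.2) (hφb.imp fun C h p => h p.1) (hfb.imp fun C h p => h p.2))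
  refine ⟨κ, inferInstance, ?_⟩
  intro n f hf hfb
  induction n with
  | zero => intro φ hφ hφb; simp
  | succ n ih =>
    intro φ hφ hφb
    let z : ℕ → ℕ := fun k => if k < n then 2 * k + 1 else 2 * (k - n)
    have hz : Function.Injective z := by
      intro a b hab
      simp only [z] at hab
      split_ifs at hab <;> omega
    have hzw : ∀ k, z k ≠ 2 * n + 1 := by
      intro k; simp only [z]; split_ifs <;> omega
    set Z : Ω → (ℕ → E) := fun ω k => ξ (z k) ω with hZdef
    have hZ : Measurable Z := by fun_prop
    have hZY : ∀ ω, (fun k => Z ω (k + n)) = Y ω := by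
      intro ω; funext k; simp [Z, Y, z]
    have hZo : ∀ ω, ∀ i ∈ Finset.range n, Z ω i = ξ (2 * i + 1) ω := by
      intro ω i hi; simp only [Finset.mem_range] at hi; simp [Z, z, hi]
    set g : (ℕ → E) → ℝ := fun s => ∫ x, f n x ∂(κ s) with hgdef
    have hg : Measurable g := ds_meas_integral κ (hf n)
    have hgb : ∃ C, ∀ s, |g s| ≤ C := ds_bdd_integral κ (hfb n)
    have hshift : Measurable (fun (s : ℕ → E) k => s (k + n)) := by fun_prop
    -- g Z = g Y a.e.
    have hgZ : (fun ω => g (Z ω)) =ᵐ[P] fun ω => g (Y ω) := by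
      have i1 : Integrable (fun ω => g (Z ω) * g (Z ω)) P :=
        ds_integrable P ((hg.comp hZ).mul (hg.comp hZ))
          (ds_bdd_mul (hgb.imp fun C h ω => h _) (hgb.imp fun C h ω => h _))
      have i2 : Integrable (fun ω => g (Y ω) * g (Z ω)) P :=
        ds_integrable P ((hg.comp hY).mul (hg.comp hZ))
          (ds_bdd_mul (hgb.imp fun C h ω => h _) (hgb.imp fun C h ω => h _))
      have i3 : Integrable (fun ω => g (Y ω) * g (Y ω)) P :=
        ds_integrable P ((hg.comp hY).mul (hg.comp hY))
          (ds_bdd_mul (hgb.imp fun C h ω => h _) (hgb.imp fun C h ω => h _))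
      have a1 : ∫ ω, g (Y ω) * g (Z ω) ∂P = ∫ ω, g (Y ω) * g (Y ω) ∂P := by
        have b1 := hstar z (2 * n + 1) hz hzw (fun s => g (fun k => s (k + n))) (f n)
          (hg.comp hshift) (hf n) (hgb.imp fun C h s => h _) (hfb n)
        have b2 := hstar (fun k => 2 * k) (2 * n + 1) (fun a b h => by simpa using h)
          (fun k => by omega) g (f n) hg (hf n) hgb (hfb n)
        change ∫ ω, g (fun k => Z ω (k + n)) * _ ∂P = 
          ∫ ω, g (fun k => Z ω (k + n)) * g (Z ω) ∂P at b1
        simp only [hZY] at b1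
        exact b1.symm.trans b2
      have a2 : ∫ ω, g (Z ω) * g (Z ω) ∂P = ∫ ω, g (Y ω) * g (Y ω) ∂P := by
        have c1 : ∀ V : Ω → (ℕ → E), Measurable V → 
            ∫ ω, g (V ω) * g (V ω) ∂P = ∫ s, g s * g s ∂(P.map V) := fun V hV => by
          have hmm : Measurable (fun s => g s * g s) := hg.mul hg
          rw [integral_map hV.aemeasurable hmm.aestronglyMeasurable]
        rw [c1 Z hZ, c1 Y hY, hZdef, hexch z hz, hYdef,
          hexch (fun k => 2 * k) (fun a b h => by simpa using h)]
      have a3 : ∫ ω, (g (Z ω) - g (Y ω)) ^ 2 ∂P = 0 := by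
        have : ∀ ω, (g (Z ω) - g (Y ω)) ^ 2 =
            g (Z ω) * g (Z ω) - 2 * (g (Y ω) * g (Z ω)) + g (Y ω) * g (Y ω) := by
          intro ω; ring
        simp only [this]
        have i12 : Integrable (fun ω => g (Z ω) * g (Z ω) - 2 * (g (Y ω) * g (Z ω))) P :=
          i1.sub (i2.const_mul 2)
        rw [integral_add i12 i3, integral_sub i1 (i2.const_mul 2),
          integral_const_mul, a1, a2]
        ring
      have i4 : Integrable (fun ω => (g (Z ω) - g (Y ω)) ^ 2) P := by
        have : (fun ω => (g (Z ω) - g (Y ω)) ^ 2) = fun ω => 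
            g (Z ω) * g (Z ω) - 2 * (g (Y ω) * g (Z ω)) + g (Y ω) * g (Y ω) := by
          funext ω; ring
        rw [this]
        exact (i1.sub (i2.const_mul 2)).add i3
      rw [integral_eq_zero_iff_of_nonneg (fun ω => sq_nonneg _) i4] at a3
      filter_upwards [a3] with ω h
      have : (g (Z ω) - g (Y ω)) ^ 2 = 0 := h
      have := pow_eq_zero_iff (two_ne_zero) |>.mp this
      linarith
    have hΦ := hstar z (2 * n + 1) hz hzw
      (fun s => φ (fun k => s (k + n)) * ∏ i ∈ Finset.range n, f i (s i)) (f n)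
      (by
        refine (hφ.comp hshift).mul ?_
        refine Finset.measurable_prod _ fun i _ => ?_
        exact (hf i).comp (measurable_pi_apply i)) (hf n)
      (ds_bdd_mul (hφb.imp fun C h s => h _) (ds_bdd_prod n f hfb (fun i (s : ℕ → E) => s i)))
      (hfb n)
    change ∫ ω, (φ (fun k => Z ω (k + n)) * ∏ i ∈ Finset.range n, f i (Z ω i)) * _ ∂P = 
      ∫ ω, (φ (fun k => Z ω (k + n)) * ∏ i ∈ Finset.range n, f i (Z ω i)) * g (Z ω) ∂P at hΦ
    simp only [hZY] at hΦ
    have hpr : ∀ ω, ∏ i ∈ Finset.range n, f i (Z ω i) =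
        ∏ i ∈ Finset.range n, f i (ξ (2 * i + 1) ω) := fun ω =>
      Finset.prod_congr rfl fun i hi => by rw [hZo ω i hi]
    simp only [hpr] at hΦ
    have ih' := ih (fun s => φ s * g s) (hφ.mul hg) (ds_bdd_mul hφb hgb)
    simp only [Finset.prod_range_succ]
    calc _ = ∫ ω, (φ (Y ω) * ∏ i ∈ Finset.range n, f i (ξ (2 * i + 1) ω)) * 
          f n (ξ (2 * n + 1) ω) ∂P := by simp only [mul_assoc]; rfl
      _ = _ := hΦ
      _ = ∫ ω, (φ (Y ω) * g (Y ω)) * ∏ i ∈ Finset.range n, f i (ξ (2 * i + 1) ω) ∂P := by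
          apply integral_congr_ae
          filter_upwards [hgZ] with ω h
          rw [h]; ring
      _ = _ := ih'
      _ = _ := by
          apply integral_congr_ae
          refine Eventually.of_forall fun ω => ?_
          simp only [hgdef]
          ring
/-- Residual kernels (successive Schur complements) with respect to the even indices. -/
def dsRes (r : ℕ → ℕ → ℝ) : ℕ → ℕ → ℕ → ℝ
  | 0 => r
  | n + 1 => fun i j => dsRes r n i j -
      dsRes r n i (2 * n) * dsRes r n j (2 * n) / dsRes r n (2 * n) (2 * n)

/-- Gram–Schmidt coefficients with respect to the even indices. -/
def dsC (r : ℕ → ℕ → ℝ) (n i : ℕ) : ℝ := dsRes r n i (2 * n) / √(dsRes r n (2 * n) (2 * n))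

/-- Arrays with unit diagonal which are Gram matrices. -/
def dsGood (r : ℕ → ℕ → ℝ) : Prop :=
  (∀ i, r i i = 1) ∧ ∀ N : ℕ, ∃ (d : ℕ) (v : ℕ → EuclideanSpace ℝ (Fin d)),
    ∀ i < N, ∀ j < N, r i j = ⟪v i, v j⟫

@[fun_prop]
theorem ds_meas_res (n i j : ℕ) : Measurable fun r => dsRes r n i j := by
  induction n generalizing i j with
  | zero => simp only [dsRes]; fun_prop
  | succ n ih => simp only [dsRes]; fun_prop

@[fun_prop]
theorem ds_meas_C (n i : ℕ) : Measurable fun r => dsC r n i := by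
  unfold dsC; fun_prop

theorem ds_equiv (r : ℕ → ℕ → ℝ) (φ : ℕ → ℕ) (n : ℕ) (h : ∀ k < n, φ (2 * k) = 2 * k) (i j : ℕ) :
    dsRes (fun l l' => r (φ l) (φ l')) n i j = dsRes r n (φ i) (φ j) := by
  induction n generalizing i j with
  | zero => rfl
  | succ n ih =>
    have h' : ∀ k < n, φ (2 * k) = 2 * k := fun k hk => h k (by omega)
    simp only [dsRes, ih h', h n (Nat.lt_succ_self n)]

theorem ds_gram {r : ℕ → ℕ → ℝ} (hr : dsGood r) (n N : ℕ) (hn : 2 * n ≤ N) :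
    ∃ (d : ℕ) (v : ℕ → EuclideanSpace ℝ (Fin d)),
    ∀ i < N, ∀ j < N, dsRes r n i j = ⟪v i, v j⟫ := by
  induction n with
  | zero => exact hr.2 N
  | succ n ih =>
    obtain ⟨d, v, hv⟩ := ih (by omega)
    refine ⟨d, fun i => v i - (⟪v i, v (2 * n)⟫ / ⟪v (2 * n), v (2 * n)⟫) • v (2 * n), ?_⟩
    intro i hi j hj
    have h2 : 2 * n < N := by omega
    simp only [dsRes, hv i hi j hj, hv i hi _ h2, hv j hj _ h2, hv _ h2 _ h2]
    by_cases h0 : v (2 * n) = 0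
    · simp [h0]
    · have h1 : (⟪v (2 * n), v (2 * n)⟫ : ℝ) ≠ 0 := inner_self_ne_zero.mpr h0
      simp only [inner_sub_left, inner_sub_right, real_inner_smul_left, real_inner_smul_right]
      rw [real_inner_comm (v j) (v (2 * n))]
      field_simp
      ring

theorem ds_res_nonneg {r : ℕ → ℕ → ℝ} (hr : dsGood r) (n i : ℕ) : 0 ≤ dsRes r n i i := by
  obtain ⟨d, v, hv⟩ := ds_gram hr n (2 * n + i + 1) (by omega)
  rw [hv i (by omega) i (by omega)]
  exact real_inner_self_nonneg

theorem ds_res_cs {r : ℕ → ℕ → ℝ} (hr : dsGood r) (n i j : ℕ) :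
    dsRes r n i j ^ 2 ≤ dsRes r n i i * dsRes r n j j := by
  obtain ⟨d, v, hv⟩ := ds_gram hr n (2 * n + i + j + 1) (by omega)
  rw [hv i (by omega) i (by omega), hv i (by omega) j (by omega), hv j (by omega) j (by omega)]
  rw [pow_two]
  exact real_inner_mul_inner_self_le _ _

theorem ds_res_eq {r : ℕ → ℕ → ℝ} (hr : dsGood r) (n i j : ℕ) :
    dsRes r n i j = r i j - ∑ k ∈ Finset.range n, dsC r k i * dsC r k j := by
  induction n with
  | zero => simp [dsRes]
  | succ n ih =>
    rw [Finset.sum_range_succ, ← sub_sub, ← ih]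
    simp only [dsRes, dsC]
    rw [div_mul_div_comm, Real.mul_self_sqrt (ds_res_nonneg hr _ _)]

theorem ds_bessel {r : ℕ → ℕ → ℝ} (hr : dsGood r) (n i : ℕ) :
    ∑ k ∈ Finset.range n, dsC r k i ^ 2 ≤ 1 := by
  have h1 := ds_res_nonneg hr n i
  rw [ds_res_eq hr, hr.1] at h1
  simp only [pow_two]
  linarith

theorem ds_res_le_one {r : ℕ → ℕ → ℝ} (hr : dsGood r) (n i : ℕ) : dsRes r n i i ≤ 1 := by
  rw [ds_res_eq hr, hr.1]
  have : 0 ≤ ∑ k ∈ Finset.range n, dsC r k i * dsC r k i :=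
    Finset.sum_nonneg fun k _ => mul_self_nonneg _
  linarith

theorem ds_res_sq_le_one {r : ℕ → ℕ → ℝ} (hr : dsGood r) (n i j : ℕ) :
    dsRes r n i j ^ 2 ≤ 1 :=
  (ds_res_cs hr n i j).trans
    (mul_le_one₀ (ds_res_le_one hr n i) (ds_res_nonneg hr n j) (ds_res_le_one hr n j))

theorem ds_res_sq_le {r : ℕ → ℕ → ℝ} (hr : dsGood r) (n i j : ℕ) :
    dsRes r n i j ^ 2 ≤ (dsRes r n i j / √(dsRes r n j j)) ^ 2 := by
  have h0 := ds_res_nonneg hr n j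
  have h1 := ds_res_le_one hr n j
  have h2 := ds_res_cs hr n i j
  rcases h0.eq_or_lt with h | h
  · rw [← h] at h2 ⊢
    simpa using h2
  · rw [div_pow, Real.sq_sqrt h0]
    exact le_div_self (sq_nonneg _) h h1

theorem ds_summable {c : ℕ → ℝ} (h : ∀ n, ∑ k ∈ Finset.range n, c k ^ 2 ≤ 1) :
    Summable fun k => c k ^ 2 :=
  summable_of_sum_range_le (fun _ => sq_nonneg _) h

open Classical in
/-- The orthogonal projection of the `i`-th vector on the span of the even ones. -/
def dsH (r : ℕ → ℕ → ℝ) (i : ℕ) : ell2 :=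
  if h : ∀ n, ∑ k ∈ Finset.range n, dsC r k i ^ 2 ≤ 1 then
    ⟨fun k => dsC r k i, memℓp_gen (by simpa using ds_summable h)⟩ else 0

open Classical in
theorem ds_H_apply (r : ℕ → ℕ → ℝ) (i k : ℕ) : (dsH r i : ℕ → ℝ) k =
    if ∀ n, ∑ k ∈ Finset.range n, dsC r k i ^ 2 ≤ 1 then dsC r k i else 0 := by
  unfold dsH
  split_ifs <;> rfl

theorem ds_H_norm (r : ℕ → ℕ → ℝ) (i : ℕ) : ‖dsH r i‖ ≤ 1 := by
  apply lp.norm_le_of_tsum_le (by simp) zero_le_one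
  simp only [ds_H_apply]
  split_ifs with h
  · simpa using (ds_summable h).tsum_le_of_sum_range_le h
  · simp

theorem ds_H_meas (i : ℕ) : Measurable fun r => dsH r i := by
  classical
  have hc : MeasurableSet {r : ℕ → ℕ → ℝ | ∀ n, ∑ k ∈ Finset.range n, dsC r k i ^ 2 ≤ 1} := by
    simp only [Set.ofPred_forall]
    exact MeasurableSet.iInter fun n => measurableSet_le (by fun_prop) measurable_const
  have hm : ∀ k, Measurable fun r => (dsH r i : ℕ → ℝ) k := by
    intro k
    simp only [ds_H_apply]
    exact Measurable.ite hc (by fun_prop) measurable_const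
  refine measurable_of_tendsto_metrizable
    (f := fun (n : ℕ) r => ∑ k ∈ Finset.range n,
      lp.single (E := fun _ : ℕ => ℝ) 2 k ((dsH r i : ℕ → ℝ) k)) ?_ ?_
  · intro n
    have : Continuous fun x : ℕ → ℝ => 
        ∑ k ∈ Finset.range n, lp.single (E := fun _ : ℕ => ℝ) 2 k (x k) := by
      refine continuous_finsetSum _ fun k _ => ?_
      exact (lp.isometry_single k).continuous.comp (continuous_apply k)
    exact this.measurable.comp (measurable_pi_lambda _ hm)
  · rw [tendsto_pi_nhds]
    intro r
    exact (lp.hasSum_single (by simp) (dsH r i)).tendsto_sum_nat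

theorem ds_H_equiv (r : ℕ → ℕ → ℝ) (φ : ℕ → ℕ) (h : ∀ k, φ (2 * k) = 2 * k) (i : ℕ) :
    dsH (fun l l' => r (φ l) (φ l')) i = dsH r (φ i) := by
  classical
  have hC : ∀ k, dsC (fun l l' => r (φ l) (φ l')) k i = dsC r k (φ i) := by
    intro k
    unfold dsC
    rw [ds_equiv r φ k (fun k _ => h k), ds_equiv r φ k (fun k _ => h k), h]
  ext k
  simp only [ds_H_apply, hC]

theorem ds_res_tendsto {r : ℕ → ℕ → ℝ} (hr : dsGood r) (i j : ℕ) :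
    Tendsto (fun n => dsRes r n i j) atTop (nhds (r i j - ⟪dsH r i, dsH r j⟫)) := by
  simp only [ds_res_eq hr]
  refine tendsto_const_nhds.sub ?_
  have := (lp.hasSum_inner (𝕜 := ℝ) (dsH r i) (dsH r j)).tendsto_sum_nat
  refine this.congr fun n => Finset.sum_congr rfl fun k _ => ?_
  simp only [ds_H_apply, if_pos (fun n => ds_bessel hr n _)]
  simp [mul_comm]

instance ds_sep : TopologicalSpace.SeparableSpace ell2 := by
  have h : Dense ((Submodule.span ℝ
      (Set.range fun k : ℕ => lp.single (E := fun _ : ℕ => ℝ) 2 k 1) : Submodule ℝ ell2) :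
      Set ell2) := by
    intro x
    refine mem_closure_of_tendsto (lp.hasSum_single (by simp) x).tendsto_sum_nat
      (Eventually.of_forall fun n => ?_)
    refine Submodule.sum_mem _ fun k _ => ?_
    have : lp.single (E := fun _ : ℕ => ℝ) 2 k ((x : ℕ → ℝ) k) =
        ((x : ℕ → ℝ) k) • lp.single (E := fun _ : ℕ => ℝ) 2 k (1 : ℝ) := by
      rw [← lp.single_smul]; simp
    rw [this]
    exact Submodule.smul_mem _ _ (Submodule.subset_span ⟨k, rfl⟩)
  have hs : TopologicalSpace.IsSeparable (Submodule.span ℝ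
      (Set.range fun k : ℕ => lp.single (E := fun _ : ℕ => ℝ) 2 k 1) : Set ell2) :=
    (Set.countable_range _).isSeparable.span
  rw [← TopologicalSpace.isSeparable_univ_iff, ← h.closure_eq]
  exact hs.closure

theorem ds_good_of_psd {r : ℕ → ℕ → ℝ} (hd : ∀ i, r i i = 1)
    (h : ∀ n : ℕ, (Matrix.of fun l l' : Fin n => r (l : ℕ) (l' : ℕ)).PosSemidef) : dsGood r := by
  refine ⟨hd, fun N => ?_⟩
  obtain ⟨m, A, hA⟩ := Matrix.posSemidef_iff_eq_sum_vecMulVec.mp (h N)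
  refine ⟨m, fun i => WithLp.toLp 2 fun k => if hi : i < N then A k ⟨i, hi⟩ else 0, ?_⟩
  intro i hi j hj
  have := congrFun (congrFun hA ⟨i, hi⟩) ⟨j, hj⟩
  simp only [Matrix.of_apply] at this
  rw [this]
  simp [Matrix.sum_apply, Matrix.vecMulVec_apply, PiLp.inner_apply, hi, hj, mul_comm]

theorem ds_inner_eq {Ω : Type*} [MeasurableSpace Ω] (P : Measure Ω)
    [IsProbabilityMeasure P]
    (R : ℕ → ℕ → Ω → ℝ) (hR_meas : ∀ l l', Measurable (R l l'))
    (hgood : ∀ᵐ ω ∂P, dsGood fun l l' => R l l' ω)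
    (hexch : ∀ perm : Equiv.Perm ℕ, {l | perm l ≠ l}.Finite →
      Measure.map (fun ω => fun l l' : ℕ => R (perm l) (perm l') ω) P =
        Measure.map (fun ω => fun l l' : ℕ => R l l' ω) P)
    (i j : ℕ) (hij : i ≠ j) (hi : Odd i) (hj : Odd j) :
    ∀ᵐ ω ∂P, R i j ω = ⟪dsH (fun l l' => R l l' ω) i, dsH (fun l l' => R l l' ω) j⟫ := by
  have hRm : Measurable fun ω => fun l l' : ℕ => R l l' ω := by fun_prop
  have hCm : ∀ n i, Measurable fun ω => dsC (fun l l' => R l l' ω) n i :=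
    fun n i => (ds_meas_C n i).comp hRm
  have hresm : ∀ n i j, Measurable fun ω => dsRes (fun l l' => R l l' ω) n i j :=
    fun n i j => (ds_meas_res n i j).comp hRm
  have hC1 : ∀ᵐ ω ∂P, ∀ n, dsC (fun l l' => R l l' ω) n i ^ 2 ≤ 1 := by
    filter_upwards [hgood] with ω h n
    refine le_trans ?_ (ds_bessel h (n + 1) i)
    exact Finset.single_le_sum (f := fun k => dsC (fun l l' => R l l' ω) k i ^ 2)
      (fun k _ => sq_nonneg _) (by simp)
  have t1 : Tendsto (fun n => ∫ ω, dsC (fun l l' => R l l' ω) n i ^ 2 ∂P) atTop (nhds 0) := by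
    have := tendsto_integral_of_dominated_convergence (μ := P)
      (F := fun n ω => dsC (fun l l' => R l l' ω) n i ^ 2) (f := fun _ => 0) (fun _ => (1 : ℝ))
      (fun n => ((hCm n i).pow_const 2).aestronglyMeasurable) (integrable_const _)
      (fun n => by
        filter_upwards [hC1] with ω h
        simpa using h n)
      (by
        filter_upwards [hgood] with ω h
        exact (ds_summable fun n => ds_bessel h n i).tendsto_atTop_zero)
    simpa using this
  have t2 : Tendsto (fun n => ∫ ω, dsRes (fun l l' => R l l' ω) n i j ^ 2 ∂P) atTop
      (nhds (∫ ω, (R i j ω - ⟪dsH (fun l l' => R l l' ω) i, dsH (fun l l' => R l l' ω) j⟫) ^ 2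
        ∂P)) := by
    refine tendsto_integral_of_dominated_convergence (μ := P) (fun _ => (1 : ℝ))
      (fun n => ((hresm n i j).pow_const 2).aestronglyMeasurable) (integrable_const _)
      (fun n => ?_) ?_
    · filter_upwards [hgood] with ω h
      simpa using ds_res_sq_le_one h n i j
    · filter_upwards [hgood] with ω h
      exact (ds_res_tendsto h i j).pow 2
  have hle : ∀ n, ∫ ω, dsRes (fun l l' => R l l' ω) n i j ^ 2 ∂P ≤
      ∫ ω, dsC (fun l l' => R l l' ω) n i ^ 2 ∂P := by
    intro n
    obtain ⟨i', hi'⟩ := hi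
    obtain ⟨j', hj'⟩ := hj
    let σ := Equiv.swap (2 * n) j
    have hσi : σ i = i := Equiv.swap_apply_of_ne_of_ne (by omega) hij
    have hσn : σ (2 * n) = j := Equiv.swap_apply_left _ _
    have hσk : ∀ k < n, σ (2 * k) = 2 * k := fun k hk =>
      Equiv.swap_apply_of_ne_of_ne (by omega) (by omega)
    have hfin : {l | σ l ≠ l}.Finite := by
      refine (Set.toFinite {2 * n, j}).subset ?_
      intro l hl
      by_contra hcon
      simp only [Set.mem_insert_iff, Set.mem_singleton_iff, not_or] at hcon
      exact hl (Equiv.swap_apply_of_ne_of_ne hcon.1 hcon.2)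
    have hCσ : ∀ ω, dsC (fun l l' => R (σ l) (σ l') ω) n i =
        dsRes (fun l l' => R l l' ω) n i j / √(dsRes (fun l l' => R l l' ω) n j j) := by
      intro ω
      unfold dsC
      rw [ds_equiv (fun l l' => R l l' ω) σ n hσk, ds_equiv (fun l l' => R l l' ω) σ n hσk,
        hσi, hσn]
    have hmC : Measurable fun r => dsC r n i ^ 2 := (ds_meas_C n i).pow_const 2
    have hint : ∫ ω, dsC (fun l l' => R (σ l) (σ l') ω) n i ^ 2 ∂P =
        ∫ ω, dsC (fun l l' => R l l' ω) n i ^ 2 ∂P := by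
      have := congrArg (fun m => ∫ r, dsC r n i ^ 2 ∂m) (hexch σ hfin)
      rw [integral_map (by fun_prop) hmC.aestronglyMeasurable,
        integral_map (by fun_prop) hmC.aestronglyMeasurable] at this
      exact this
    rw [← hint]
    have hCσ1 : ∀ᵐ ω ∂P, dsC (fun l l' => R (σ l) (σ l') ω) n i ^ 2 ≤ 1 := by
      have hms : MeasurableSet {r : ℕ → ℕ → ℝ | dsC r n i ^ 2 ≤ 1} :=
        measurableSet_le hmC measurable_const
      have e1 : ∀ᵐ r ∂(P.map fun ω => fun l l' : ℕ => R l l' ω), dsC r n i ^ 2 ≤ 1 := by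
        rw [ae_map_iff hRm.aemeasurable hms]
        filter_upwards [hC1] with ω h using h n
      rw [← hexch σ hfin, ae_map_iff (by fun_prop) hms] at e1
      exact e1
    refine integral_mono_ae ?_ ?_ ?_
    · refine Integrable.of_bound ((hresm n i j).pow_const 2).aestronglyMeasurable 1 ?_
      filter_upwards [hgood] with ω h
      simpa using ds_res_sq_le_one h n i j
    · have hm' : Measurable fun ω => dsC (fun l l' => R (σ l) (σ l') ω) n i ^ 2 :=
        hmC.comp (g := fun r => dsC r n i ^ 2) (f := fun ω => fun l l' : ℕ => R (σ l) (σ l') ω)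
          (by fun_prop)
      refine Integrable.of_bound hm'.aestronglyMeasurable 1 ?_
      filter_upwards [hCσ1] with ω h
      simpa using h
    · filter_upwards [hgood] with ω h
      rw [hCσ]
      exact ds_res_sq_le h n i j
  have hL : ∫ ω, (R i j ω - ⟪dsH (fun l l' => R l l' ω) i, dsH (fun l l' => R l l' ω) j⟫) ^ 2
        ∂P = 0 := by
    refine le_antisymm (le_of_tendsto_of_tendsto' t2 t1 hle)
      (integral_nonneg fun ω => sq_nonneg _)
  have hHm : ∀ i, Measurable fun ω => dsH (fun l l' => R l l' ω) i :=
    fun i => (ds_H_meas i).comp hRm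
  have hmL : Measurable fun ω =>
      (R i j ω - ⟪dsH (fun l l' => R l l' ω) i, dsH (fun l l' => R l l' ω) j⟫) ^ 2 :=
    ((hR_meas i j).sub ((hHm i).inner (hHm j))).pow_const 2
  rw [integral_eq_zero_iff_of_nonneg (fun ω => sq_nonneg _)] at hL
  · filter_upwards [hL] with ω h
    have h' := pow_eq_zero_iff (two_ne_zero) |>.mp h
    linarith
  · refine Integrable.of_bound hmL.aestronglyMeasurable 1 ?_
    filter_upwards [hgood] with ω h
    have := le_of_tendsto' ((ds_res_tendsto h i j).pow 2) (fun n => ds_res_sq_le_one h n i j)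
    simpa using this

/-- The Dovbysh–Sudakov representation: a Gram–de Finetti array with unit diagonal is
generated by an i.i.d. sample from a random probability measure on the unit ball of a
separable Hilbert space. -/
theorem dovbysh_sudakov {Ω : Type} [MeasurableSpace Ω] (P : Measure Ω)
    [IsProbabilityMeasure P]
    (R : ℕ → ℕ → Ω → ℝ) (hR_meas : ∀ l l', Measurable (R l l'))
    -- unit diagonal and symmetry
    (hdiag : ∀ l ω, R l l ω = 1) (hsymm : ∀ l l' ω, R l l' ω = R l' l ω)
    -- every finite principal submatrix is positive semidefinite almost surely
    (hpsd : ∀ n : ℕ, ∀ᵐ ω ∂P,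
      (Matrix.of fun l l' : Fin n => R (l : ℕ) (l' : ℕ) ω).PosSemidef)
    -- weak exchangeability: invariance under permutations of finitely many indices
    (hexch : ∀ perm : Equiv.Perm ℕ, {l | perm l ≠ l}.Finite →
      Measure.map (fun ω => fun l l' : ℕ => R (perm l) (perm l') ω) P =
        Measure.map (fun ω => fun l l' : ℕ => R l l' ω) P) :
    ∃ (Ω' : Type) (_ : MeasurableSpace Ω') (P' : Measure Ω') (_ : IsProbabilityMeasure P')
      (G : Ω' → Measure ell2) (ρ : ℕ → Ω' → ell2),
      Measurable G ∧ (∀ l, Measurable (ρ l)) ∧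
      -- `G` is a random probability measure on the unit ball
      (∀ ω, IsProbabilityMeasure (G ω)) ∧
      (∀ ω, G ω {h : ell2 | ‖h‖ ≤ 1} = 1) ∧
      -- conditionally on `G`, the sequence `(ρ^l)` is i.i.d. with law `G`
      (∀ (n : ℕ) (f : Fin n → ell2 → ℝ), (∀ i, Measurable (f i)) →
        (∀ i, ∃ C, ∀ h, |f i h| ≤ C) →
        (P'[fun ω => ∏ i, f i (ρ i ω)|MeasurableSpace.comap G inferInstance]
          =ᵐ[P'] fun ω => ∏ i, ∫ h, f i h ∂(G ω))) ∧
      -- the array is generated by the sample `(ρ^l)` in distribution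
      Measure.map (fun ω => fun l l' : ℕ => R l l' ω) P =
        Measure.map (fun ω => fun l l' : ℕ =>
          ⟪ρ l ω, ρ l' ω⟫ + if l = l' then 1 - ‖ρ l ω‖ ^ 2 else 0) P' := by
  classical
  have hRm : Measurable fun ω => fun l l' : ℕ => R l l' ω := by fun_prop
  have hinj := ds_inj P R hR_meas hexch
  have hgood : ∀ᵐ ω ∂P, dsGood fun l l' => R l l' ω := by
    filter_upwards [ae_all_iff.mpr hpsd] with ω h
    exact ds_good_of_psd (fun i => hdiag i ω) h
  let E : Type := {h : ell2 // ‖h‖ ≤ 1}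
  have hball : MeasurableSet {h : ell2 | ‖h‖ ≤ 1} :=
    measurableSet_le measurable_norm measurable_const
  have hE : StandardBorelSpace E := hball.standardBorel
  have hEn : Nonempty E := ⟨⟨0, by simp⟩⟩
  let hfun : (ℕ → ℕ → ℝ) → ℕ → E := fun r n => ⟨dsH r (2 * n + 1), ds_H_norm _ _⟩
  have hfun_meas : Measurable hfun :=
    measurable_pi_lambda _ fun n => (ds_H_meas (2 * n + 1)).subtype_mk
  let ξ : ℕ → Ω → E := fun n ω => hfun (fun l l' => R l l' ω) n
  have hξ : ∀ n, Measurable (ξ n) := fun n =>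
    ((measurable_pi_apply n).comp hfun_meas).comp hRm
  have hξexch : ∀ φ : ℕ → ℕ, Function.Injective φ →
      P.map (fun ω n => ξ (φ n) ω) = P.map (fun ω n => ξ n ω) := by
    intro φ hφ
    let ψ : ℕ → ℕ := fun m => if m % 2 = 0 then m else 2 * φ (m / 2) + 1
    have hψ : Function.Injective ψ := by
      intro a b hab
      simp only [ψ] at hab
      split_ifs at hab with h1 h2 h2
      · exact hab
      · omega
      · omega
      · have h3 : φ (a / 2) = φ (b / 2) := by omega
        have h4 := hφ h3
        omega
    have hψe : ∀ k, ψ (2 * k) = 2 * k := by intro k; simp [ψ]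
    have hψo : ∀ n, ψ (2 * n + 1) = 2 * φ n + 1 := by
      intro n
      have h1 : (2 * n + 1) % 2 = 1 := by omega
      have h2 : (2 * n + 1) / 2 = n := by omega
      simp [ψ, h1, h2]
    have h1 : (fun ω n => ξ (φ n) ω) =
        hfun ∘ (fun ω => fun l l' : ℕ => R (ψ l) (ψ l') ω) := by
      funext ω n
      apply Subtype.ext
      change dsH (fun l l' => R l l' ω) (2 * φ n + 1) =
        dsH (fun l l' : ℕ => R (ψ l) (ψ l') ω) (2 * n + 1)
      rw [ds_H_equiv (fun l l' => R l l' ω) ψ hψe, hψo]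
    have h2 : (fun ω n => ξ n ω) = hfun ∘ (fun ω => fun l l' : ℕ => R l l' ω) := rfl
    rw [h1, h2, ← Measure.map_map hfun_meas (by fun_prop), ← Measure.map_map hfun_meas hRm,
      hinj ψ hψ]
  obtain ⟨κ, hκ, hdf⟩ := ds_definetti P ξ hξ hξexch
  let Y : Ω → (ℕ → E) := fun ω k => ξ (2 * k) ω
  have hY : Measurable Y := measurable_pi_lambda _ fun k => hξ _
  let κ' : Kernel (ℕ → E) ell2 := κ.map Subtype.val
  have hκ' : IsMarkovKernel κ' := Kernel.IsMarkovKernel.map κ measurable_subtype_coe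
  have hκ'int : ∀ s (f : ell2 → ℝ), Measurable f →
      ∫ h, f h ∂(κ' s) = ∫ x : E, f x.1 ∂(κ s) := by
    intro s f hf
    change ∫ h, f h ∂((κ.map Subtype.val) s) = _
    rw [Kernel.map_apply _ measurable_subtype_coe,
      integral_map measurable_subtype_coe.aemeasurable hf.aestronglyMeasurable]
  let G : Ω → Measure ell2 := fun ω => κ' (Y ω)
  have hG : Measurable G := κ'.measurable.comp hY
  refine ⟨Ω, inferInstance, P, inferInstance, G, fun l ω => (ξ (2 * l + 1) ω).1, hG,
    fun l => measurable_subtype_coe.comp (hξ _), fun ω => inferInstanceAs (IsProbabilityMeasure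
      (κ' (Y ω))), ?_, ?_, ?_⟩
  · intro ω
    change (κ.map Subtype.val) (Y ω) _ = 1
    rw [Kernel.map_apply' _ measurable_subtype_coe _ hball]
    have : (Subtype.val : E → ell2) ⁻¹' {h : ell2 | ‖h‖ ≤ 1} = Set.univ := by
      ext x; simpa using x.2
    rw [this]
    exact measure_univ
  · intro n f hf hfb
    have hm : MeasurableSpace.comap G inferInstance ≤ (inferInstance : MeasurableSpace Ω) :=
      hG.comap_le
    -- the limiting product is measurable with respect to `σ(G)`
    have hgm : Measurable[MeasurableSpace.comap G inferInstance]
        fun ω => ∏ i, ∫ h, f i h ∂(G ω) := by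
      let K : @Kernel Ω ell2 (MeasurableSpace.comap G inferInstance) _ :=
        @Kernel.mk Ω ell2 (MeasurableSpace.comap G inferInstance) _ G (comap_measurable G)
      have hK : @IsMarkovKernel Ω ell2 (MeasurableSpace.comap G inferInstance) _ K :=
        @IsMarkovKernel.mk Ω ell2 (MeasurableSpace.comap G inferInstance) _ K
          (fun ω => inferInstanceAs (IsProbabilityMeasure (κ' (Y ω))))
      refine Finset.measurable_prod _ fun i _ => ?_
      exact @ds_meas_integral Ω ell2 (MeasurableSpace.comap G inferInstance) _ K hK _ (hf i)
    have hbi : ∀ i, ∃ C, ∀ ω, |∫ h, f i h ∂(G ω)| ≤ C := fun i =>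
      (ds_bdd_integral κ' (hfb i)).imp fun C h ω => h _
    have hfm : Measurable fun ω => ∏ i : Fin n, f i (ξ (2 * (i : ℕ) + 1) ω).1 :=
      Finset.measurable_prod _ fun i _ => (hf i).comp (measurable_subtype_coe.comp (hξ _))
    have hprodb : ∀ u : Fin n → Ω → ℝ, (∀ i, ∃ C, ∀ ω, |u i ω| ≤ C) →
        ∃ C, ∀ ω, |∏ i, u i ω| ≤ C := by
      intro u hu
      choose C hC using hu
      refine ⟨∏ i, C i, fun x => ?_⟩
      rw [Finset.abs_prod]
      exact Finset.prod_le_prod (fun i _ => abs_nonneg _) (fun i _ => hC i _)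
    have hfi : Integrable (fun ω => ∏ i : Fin n, f i (ξ (2 * (i : ℕ) + 1) ω).1) P :=
      ds_integrable P hfm (hprodb _ fun i => (hfb i).imp fun C h ω => h _)
    have hgi : Integrable (fun ω => ∏ i, ∫ h, f i h ∂(G ω)) P :=
      ds_integrable P (hgm.mono hm le_rfl) (hprodb _ hbi)
    refine (ae_eq_condExp_of_forall_setIntegral_eq hm hfi (fun s _ _ => hgi.integrableOn) ?_
      (hgm.stronglyMeasurable.aestronglyMeasurable)).symm
    rintro s ⟨t, ht, rfl⟩ -
    let f' : ℕ → E → ℝ := fun i x => if h : i < n then f ⟨i, h⟩ x.1 else 0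
    have hf' : ∀ i, Measurable (f' i) := by
      intro i
      by_cases h : i < n
      · simp only [f', h, dif_pos]; exact (hf _).comp measurable_subtype_coe
      · simp only [f', h, dif_neg, not_false_eq_true]; exact measurable_const
    have hfb' : ∀ i, ∃ C, ∀ x, |f' i x| ≤ C := by
      intro i
      by_cases h : i < n
      · simp only [f', h, dif_pos]; exact (hfb _).imp fun C h x => h _
      · exact ⟨0, fun x => by simp [f', h]⟩
    let S : Set (ℕ → E) := κ' ⁻¹' t
    have hS : MeasurableSet S := κ'.measurable ht
    have hGt : MeasurableSet (G ⁻¹' t) := hG ht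
    have hind := hdf n f' hf' hfb' (S.indicator fun _ => 1) (measurable_const.indicator hS)
      ⟨1, fun x => by
        by_cases hx : x ∈ S
        · simp [hx]
        · simp [hx]⟩
    rw [← integral_indicator hGt, ← integral_indicator hGt]
    have e1 : ∀ ω, (G ⁻¹' t).indicator (fun ω => ∏ i, ∫ h, f i h ∂(G ω)) ω =
        (S.indicator (fun _ => (1 : ℝ)) (fun k => ξ (2 * k) ω)) *
        ∏ i ∈ Finset.range n, ∫ x, f' i x ∂(κ (fun k => ξ (2 * k) ω)) := by
      intro ω
      have e2 : ∏ i ∈ Finset.range n, ∫ x, f' i x ∂(κ (fun k => ξ (2 * k) ω)) =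
          ∏ i, ∫ h, f i h ∂(G ω) := by
        rw [Finset.prod_range]
        refine Finset.prod_congr rfl fun i _ => ?_
        rw [show (∫ h, f i h ∂(G ω)) = _ from hκ'int (Y ω) (f i) (hf i)]
        simp [f', Y]
      rw [e2]
      by_cases hω : ω ∈ G ⁻¹' t
      · have hω' : (fun k => ξ (2 * k) ω) ∈ S := hω
        simp [hω, hω']
      · have hω' : (fun k => ξ (2 * k) ω) ∉ S := hω
        simp [hω, hω']
    have e3 : ∀ ω, (G ⁻¹' t).indicator
        (fun ω => ∏ i : Fin n, f i (ξ (2 * (i : ℕ) + 1) ω).1) ω =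
        (S.indicator (fun _ => (1 : ℝ)) (fun k => ξ (2 * k) ω)) *
        ∏ i ∈ Finset.range n, f' i (ξ (2 * i + 1) ω) := by
      intro ω
      have e2 : ∏ i ∈ Finset.range n, f' i (ξ (2 * i + 1) ω) =
          ∏ i : Fin n, f i (ξ (2 * (i : ℕ) + 1) ω).1 := by
        rw [Finset.prod_range]
        refine Finset.prod_congr rfl fun i _ => ?_
        simp [f']
      rw [e2]
      by_cases hω : ω ∈ G ⁻¹' t
      · have hω' : (fun k => ξ (2 * k) ω) ∈ S := hω
        simp [hω, hω']
      · have hω' : (fun k => ξ (2 * k) ω) ∉ S := hω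
        simp [hω, hω']
    rw [integral_congr_ae (Eventually.of_forall e1), integral_congr_ae (Eventually.of_forall e3)]
    exact hind.symm
  · rw [← hinj (fun l => 2 * (2 * l + 1) + 1) (fun a b h => by simpa using h)]
    apply Measure.map_congr
    have hall : ∀ᵐ ω ∂P, ∀ l l' : ℕ, l ≠ l' →
        R (2 * (2 * l + 1) + 1) (2 * (2 * l' + 1) + 1) ω =
        ⟪dsH (fun l l' => R l l' ω) (2 * (2 * l + 1) + 1),
          dsH (fun l l' => R l l' ω) (2 * (2 * l' + 1) + 1)⟫ := by
      rw [ae_all_iff]; intro l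
      rw [ae_all_iff]; intro l'
      by_cases hl : l = l'
      · exact Eventually.of_forall fun ω h => absurd hl h
      · filter_upwards [ds_inner_eq P R hR_meas hgood hexch (2 * (2 * l + 1) + 1)
          (2 * (2 * l' + 1) + 1) (by omega) ⟨_, rfl⟩ ⟨_, rfl⟩] with ω h _ using h
    filter_upwards [hall] with ω h
    funext l l'
    by_cases hl : l = l'
    · subst hl
      simp only [hdiag, if_true]
      rw [real_inner_self_eq_norm_sq]
      ring
    · simp only [hl, if_false, add_zero]
      exact h l l' hl
end
end

section
/- Let n ≥ 1 and let R be a symmetric n×n real matrix with R_{l,l} = 1 and |R_{l,l'}| ≤ 1 for all l, l', satisfying the ultrametric inequality R_{l,l'} ≥ min(R_{l,l''}, R_{l',l''}) for all l, l', l''. Then for every q ∈ ℝ, the n×n matrix A with entries A_{l,l'} = 1 if q ≤ R_{l,l'} and A_{l,l'} = 0 otherwise is symmetric positive semidefinite. -/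
/-- Under ultrametricity, the indicator matrix `A_{l,l'} = 1(q ≤ R_{l,l'})` is
symmetric positive semidefinite. -/
theorem indicator_matrix_posSemidef (n : ℕ) (hn : 1 ≤ n) (R : Matrix (Fin n) (Fin n) ℝ)
    (hsym : R.IsSymm) (hdiag : ∀ l, R l l = 1) (hbdd : ∀ l l', |R l l'| ≤ 1)
    (hultra : ∀ l l' l'', min (R l l'') (R l' l'') ≤ R l l') (q : ℝ) :
    (Matrix.of fun l l' => if q ≤ R l l' then (1 : ℝ) else 0).PosSemidef := by
  classical
  by_cases hq : q ≤ 1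
  · let S : Setoid (Fin n) :=
      { r := fun l l' => q ≤ R l l'
        iseqv :=
          { refl := fun l => by rw [hdiag]; exact hq
            symm := fun {l l'} h => by rw [hsym.apply]; exact h
            trans := fun {a b c} h1 h2 =>
              le_trans (le_min h1 (by rw [hsym.apply]; exact h2)) (hultra a c b) } }
    have h := (Matrix.PosSemidef.one (n := Quotient S) (R := ℝ)).submatrix (Quotient.mk S)
    convert h using 1
    ext l l'
    have key : (Quotient.mk S l = Quotient.mk S l') ↔ q ≤ R l l' := Quotient.eq
    simp only [Matrix.of_apply, Matrix.submatrix_apply, Matrix.one_apply, key]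
  · have h : (Matrix.of fun l l' => if q ≤ R l l' then (1 : ℝ) else 0) = 0 := by
      ext l l'
      have h1 : ¬ q ≤ R l l' := fun h => hq (h.trans ((le_abs_self _).trans (hbdd l l')))
      simp [h1]
    rw [h]
    exact Matrix.PosSemidef.zero
end

section
/- Let k ≥ 1 and define κ: [0,1] → [0,1] by κ(q) = j/k for j/k ≤ q < (j+1)/k, j = 0, …, k (so κ(1) = 1); equivalently κ(q) = Σ_{j=1}^{k} (1/k) 1(j/k ≤ q). Let n ≥ 1 and let R be a symmetric n×n real matrix with R_{l,l} = 1, entries in [0,1], satisfying the ultrametric inequality R_{l,l'} ≥ min(R_{l,l''}, R_{l',l''}) for all l, l', l''. Then the matrix (κ(R_{l,l'}))_{l,l'≤n} is symmetric positive semidefinite. -/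
/-- The discretization map `κ(q) = Σ_{j=1}^{k} (1/k) 1(j/k ≤ q)`, i.e. `κ(q) = j/k`
for `j/k ≤ q < (j+1)/k`. -/
noncomputable def kappa (k : ℕ) (q : ℝ) : ℝ :=
  ∑ j ∈ Finset.Icc 1 k, (k : ℝ)⁻¹ * (if (j : ℝ) / k ≤ q then 1 else 0)

open Classical in
/-- The indicator matrix of an equivalence relation is positive semidefinite. -/
theorem setoid_indicator_posSemidef {n : ℕ} (S : Setoid (Fin n)) :
    (Matrix.of fun l l' => if S l l' then (1 : ℝ) else 0).PosSemidef := by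
  have h := (Matrix.PosSemidef.one (n := Quotient S) (R := ℝ)).submatrix
    (fun l : Fin n => Quotient.mk S l)
  convert h using 1
  ext l l'
  simp only [Matrix.of_apply, Matrix.submatrix_apply, Matrix.one_apply]
  congr 1
  exact propext Quotient.eq.symm

/-- Under ultrametricity, the matrix `(κ(R_{l,l'}))` is symmetric positive semidefinite. -/
theorem kappa_matrix_posSemidef (k : ℕ) (hk : 1 ≤ k) (n : ℕ) (hn : 1 ≤ n)
    (R : Matrix (Fin n) (Fin n) ℝ) (hsym : R.IsSymm) (hdiag : ∀ l, R l l = 1)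
    (hrange : ∀ l l', R l l' ∈ Set.Icc (0 : ℝ) 1)
    (hultra : ∀ l l' l'', min (R l l'') (R l' l'') ≤ R l l') :
    (Matrix.of fun l l' => kappa k (R l l')).PosSemidef := by
  have key : (Matrix.of fun l l' => kappa k (R l l')) =
      ∑ j ∈ Finset.Icc 1 k, (k : ℝ)⁻¹ •
        (Matrix.of fun l l' => if (j : ℝ) / k ≤ R l l' then (1 : ℝ) else 0) := by
    ext l l'
    simp [kappa, Matrix.sum_apply]
  rw [key]
  refine Matrix.posSemidef_sum _ fun j hj => Matrix.PosSemidef.smul ?_ (by positivity)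
  have hj1 : (j : ℝ) / k ≤ 1 := by
    have := (Finset.mem_Icc.mp hj).2
    exact div_le_one_of_le₀ (by exact_mod_cast this) (by positivity)
  let S : Setoid (Fin n) :=
    { r := fun l l' => (j : ℝ) / k ≤ R l l'
      iseqv :=
        { refl := fun l => by rw [hdiag]; exact hj1
          symm := fun {l l'} h => by rw [hsym.apply]; exact h
          trans := fun {a b c} h1 h2 =>
            (le_min h1 (by rw [hsym.apply]; exact h2)).trans (hultra a c b) } }
  convert setoid_indicator_posSemidef S using 1
  ext l l'
  simp only [Matrix.of_apply]
  congr 1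
end
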